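/- Let δ > 0 and assume p ≥ 2. Set U_M = 4 σ² (δ+1) ν_r^{-2} ‖Ψ_M‖_F² ln p, and let θ̂ be any minimizer over the simplex Θ_𝓜 = {θ : θ_M ≥ 0 for all M ∈ 𝓜, Σ_{M∈𝓜} θ_M = 1} of Σ_{M∈𝓜} θ_M ( ‖z − f̂_M‖² + 2 U_M ) + ‖z − Σ_{M∈𝓜} θ_M f̂_M‖², and put f̂_{θ̂} = Σ_{M∈𝓜} θ̂_M f̂_M. Then with probability at least 1 − √(2/π) p^{−δ}, one has ‖f̂_{θ̂} − f‖² ≤ min_{M ∈ 𝓜} { ‖f_M − f‖² + 10 ν_r^{-2} σ² (δ+1) ‖Ψ_M‖_F² ln p }. -/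

import Mathlib

open MeasureTheory ProbabilityTheory Matrix Finset

noncomputable section

/-- Squared Euclidean norm of a vector in `ℝ^k`. -/
def sqnorm {k : ℕ} (v : Fin k → ℝ) : ℝ := ∑ i, v i ^ 2

/-- Euclidean inner product on `ℝ^k`. -/
def ip {k : ℕ} (u v : Fin k → ℝ) : ℝ := ∑ i, u i * v i

/-- The `j`-th column of a matrix. -/
def colv {a b : ℕ} (B : Matrix (Fin a) (Fin b) ℝ) (j : Fin b) : Fin a → ℝ := fun i => B i j

/-- The matrix `B_M`: the columns of `B` outside `M` are replaced by zero. -/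
def restr {a b : ℕ} (B : Matrix (Fin a) (Fin b) ℝ) (M : Finset (Fin b)) :
    Matrix (Fin a) (Fin b) ℝ := fun i j => if j ∈ M then B i j else 0

/-- Squared Frobenius norm of a matrix. -/
def frob2 {a b : ℕ} (B : Matrix (Fin a) (Fin b) ℝ) : ℝ := ∑ j, sqnorm (colv B j)

/-- `x` has at most `r` nonzero coordinates. -/
def sparse {k : ℕ} (r : ℕ) (x : Fin k → ℝ) : Prop := (Function.support x).ncard ≤ r

/-- `H` is the orthogonal projection matrix of `ℝ^m` onto `span{φ_j : j ∈ M}`: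
symmetric, idempotent, with range equal to the span of the columns of `Φ` indexed by `M`. -/
def IsProjOnto {m p : ℕ} (Φ : Matrix (Fin m) (Fin p) ℝ) (M : Finset (Fin p))
    (H : Matrix (Fin m) (Fin m) ℝ) : Prop :=
  H.IsSymm ∧ H * H = H ∧
    LinearMap.range H.mulVecLin = Submodule.span ℝ (colv Φ '' (M : Set (Fin p)))

/-- `Ψ = A (AᵀA)⁻¹ Φ`. -/
def Psi {n m p : ℕ} (A : Matrix (Fin n) (Fin m) ℝ) (Φ : Matrix (Fin m) (Fin p) ℝ) :
    Matrix (Fin n) (Fin p) ℝ := A * (Aᵀ * A)⁻¹ * Φ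

/-- `z = (AᵀA)⁻¹ Aᵀ y` where `y = A f + σ e`. -/
def zv {n m : ℕ} (A : Matrix (Fin n) (Fin m) ℝ) (f : Fin m → ℝ) (σ : ℝ) (e : Fin n → ℝ) :
    Fin m → ℝ := ((Aᵀ * A)⁻¹ * Aᵀ).mulVec (A.mulVec f + σ • e)

/-- `ξ = (AᵀA)⁻¹ Aᵀ e`. -/
def xiv {n m : ℕ} (A : Matrix (Fin n) (Fin m) ℝ) (e : Fin n → ℝ) : Fin m → ℝ :=
  ((Aᵀ * A)⁻¹ * Aᵀ).mulVec e

/-- The collection `𝓜` of models of size at most `r/2`. -/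
def models (p r : ℕ) : Finset (Finset (Fin p)) := Finset.univ.filter fun M => 2 * M.card ≤ r

open scoped Classical in
/-- The restricted collection `𝓜_γ = {M ∈ 𝓜 : ‖Ψ_M‖_F² ≤ γ²n}`. -/
def modelsG {n m p : ℕ} (r : ℕ) (A : Matrix (Fin n) (Fin m) ℝ) (Φ : Matrix (Fin m) (Fin p) ℝ)
    (γ : ℝ) : Finset (Finset (Fin p)) :=
  Finset.univ.filter fun M => 2 * M.card ≤ r ∧ frob2 (restr (Psi A Φ) M) ≤ γ ^ 2 * (n : ℝ)

/-- The aggregated estimator `f̂_θ = ∑_{M ∈ C} θ_M f̂_M`, where `f̂_M = H_M z`. -/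
def aggEst {m p : ℕ} (C : Finset (Finset (Fin p)))
    (H : Finset (Fin p) → Matrix (Fin m) (Fin m) ℝ) (zvec : Fin m → ℝ)
    (θ : Finset (Fin p) → ℝ) : Fin m → ℝ :=
  ∑ M ∈ C, θ M • (H M).mulVec zvec

/-- The penalty `U_M = 4σ²(δ+1)ν_r⁻² ‖Ψ_M‖_F² ln p`. -/
def Ufun {n m p : ℕ} (A : Matrix (Fin n) (Fin m) ℝ) (Φ : Matrix (Fin m) (Fin p) ℝ)
    (σ δ ν2 : ℝ) (M : Finset (Fin p)) : ℝ :=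
  4 * σ ^ 2 * (δ + 1) / ν2 * frob2 (restr (Psi A Φ) M) * Real.log p

/-- The Q-aggregation criterion (with `α = 1/2`, multiplied by 2):
`∑_M θ_M (‖z - f̂_M‖² + 2U_M) + ‖z - f̂_θ‖²`. -/
def aggCrit {m p : ℕ} (C : Finset (Finset (Fin p)))
    (H : Finset (Fin p) → Matrix (Fin m) (Fin m) ℝ) (zvec : Fin m → ℝ)
    (U : Finset (Fin p) → ℝ) (θ : Finset (Fin p) → ℝ) : ℝ :=
  ∑ M ∈ C, θ M * (sqnorm (zvec - (H M).mulVec zvec) + 2 * U M) +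
    sqnorm (zvec - aggEst C H zvec θ)

/-!
Along a segment the Q-aggregation criterion is strongly convex with the exact modulus
`‖f̂_θ - f̂_ϑ‖²`, so its minimality over the simplex comes with a quadratic gain. Together with the
bias–variance identity this gives, for every competitor `M`, the deterministic inequality
`2 ‖z - f̂_θ‖² + ∑ S, θ_S (‖f̂_S - f̂_M‖² + 2 U_S) ≤ 2 ‖z - f̂_M‖² + 2 U_M`. Noise enters through
the correlations `⟨ξ, f̂_S - f̂_M⟩`; since `f̂_S - f̂_M` lies in the span of at most `r` dictionary
elements, Cauchy–Schwarz and `ν_r` bound them by the `⟨ξ, φ_j⟩ = ⟨ε, ψ_j⟩`, and Young's inequality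
absorbs the rest into the gain. All of this holds on the event that
`⟨ε, ψ_j⟩² ≤ 2 (δ + 1) ln p ‖ψ_j‖²` for every `j`, whose probability is controlled by the Mills
ratio bound and a union bound. The constant is `10 = 2 · 4 + 2`: twice the penalty, plus the squared
norm of the projected noise in `‖f̂_M - f‖²`.
-/

open scoped RealInnerProductSpace NNReal

section QAggregation

variable {ι E : Type*} [NormedAddCommGroup E] [InnerProductSpace ℝ E]

lemma norm_one_sub_smul_add_smul_sq (t : ℝ) (a b : E) :
    ‖(1 - t) • a + t • b‖ ^ 2 =
      (1 - t) * ‖a‖ ^ 2 + t * ‖b‖ ^ 2 - t * (1 - t) * ‖a - b‖ ^ 2 := by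
  rw [norm_add_sq_real, norm_sub_sq_real, norm_smul, norm_smul, real_inner_smul_left,
    real_inner_smul_right, mul_pow, mul_pow, Real.norm_eq_abs, Real.norm_eq_abs, sq_abs, sq_abs]
  ring

lemma le_of_forall_Ioo_one_sub_mul_le {a b : ℝ} (h : ∀ t ∈ Set.Ioo (0 : ℝ) 1, (1 - t) * a ≤ b) :
    a ≤ b := by
  have hlim : Filter.Tendsto (fun t : ℝ => (1 - t) * a) (nhdsWithin 0 (Set.Ioi 0)) (nhds a) := by
    have hcont : Continuous fun t : ℝ => (1 - t) * a := by fun_prop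
    simpa [ContinuousWithinAt] using hcont.continuousWithinAt (x := 0) (s := Set.Ioi 0)
  exact le_of_tendsto hlim (Filter.eventually_of_mem (Ioo_mem_nhdsGT one_pos) h)

/- On a segment the objective deviates from its chord by exactly `t (1 - t) ‖L x - L y‖²`, so
minimality at `x` can be divided by `t` before letting `t → 0`. -/
theorem add_norm_sq_le_of_isMinOn {V : Type*} [AddCommGroup V] [Module ℝ V] {s : Set V}
    (hs : Convex ℝ s) (ℓ : V →ₗ[ℝ] ℝ) (L : V →ₗ[ℝ] E) (z : E) {x y : V} (hx : x ∈ s) (hy : y ∈ s)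
    (hmin : IsMinOn (fun v => ℓ v + ‖z - L v‖ ^ 2) s x) :
    ℓ x + ‖z - L x‖ ^ 2 + ‖L x - L y‖ ^ 2 ≤ ℓ y + ‖z - L y‖ ^ 2 := by
  suffices h : ‖L x - L y‖ ^ 2 ≤ ℓ y + ‖z - L y‖ ^ 2 - (ℓ x + ‖z - L x‖ ^ 2) by linarith
  refine le_of_forall_Ioo_one_sub_mul_le fun t ⟨ht₀, ht₁⟩ => ?_
  have hmem : (1 - t) • x + t • y ∈ s := hs hx hy (by linarith) ht₀.le (by ring)
  have hseg : z - L ((1 - t) • x + t • y) = (1 - t) • (z - L x) + t • (z - L y) := by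
    rw [map_add, map_smul, map_smul]
    module
  have hle : ℓ x + ‖z - L x‖ ^ 2 ≤ (1 - t) * (ℓ x + ‖z - L x‖ ^ 2) +
      t * (ℓ y + ‖z - L y‖ ^ 2) - t * (1 - t) * ‖L x - L y‖ ^ 2 := by
    have h := isMinOn_iff.1 hmin _ hmem
    rw [hseg, norm_one_sub_smul_add_smul_sq, sub_sub_sub_cancel_left, norm_sub_rev (L y),
      map_add, map_smul, map_smul, smul_eq_mul, smul_eq_mul] at h
    linarith
  refine le_of_mul_le_mul_left ?_ ht₀
  linarith

/-- The probability simplex `Θ_C` of weights indexed by `C`. Weights are functions on the whole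
index type, their values outside `C` being irrelevant. -/
def weightSimplex (C : Finset ι) : Set (ι → ℝ) := {θ | (∀ i ∈ C, 0 ≤ θ i) ∧ ∑ i ∈ C, θ i = 1}

/-- The Q-aggregation criterion `∑ i, θ i (‖z - g i‖² + 2 U i) + ‖z - ∑ i, θ i g i‖²` for
aggregating arbitrary estimators `g i` with penalties `U i`. -/
def qCriterion (C : Finset ι) (g : ι → E) (z : E) (U θ : ι → ℝ) : ℝ :=
  ∑ i ∈ C, θ i * (‖z - g i‖ ^ 2 + 2 * U i) + ‖z - ∑ i ∈ C, θ i • g i‖ ^ 2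

variable {C : Finset ι} {g : ι → E} {f z η : E} {U θ : ι → ℝ} {k : ι}

lemma convex_weightSimplex (C : Finset ι) : Convex ℝ (weightSimplex C) := by
  rintro θ ⟨hθ, hθ₁⟩ θ' ⟨hθ', hθ₁'⟩ a b ha hb hab
  refine ⟨fun i hi => ?_, ?_⟩
  · exact add_nonneg (mul_nonneg ha (hθ i hi)) (mul_nonneg hb (hθ' i hi))
  · simp only [Pi.add_apply, Pi.smul_apply, smul_eq_mul, sum_add_distrib, ← mul_sum, hθ₁, hθ₁',
      mul_one, hab]

lemma single_mem_weightSimplex [DecidableEq ι] (hk : k ∈ C) :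
    Pi.single k (1 : ℝ) ∈ weightSimplex C :=
  have hnonneg : (0 : ι → ℝ) ≤ Pi.single k 1 := Pi.single_nonneg.2 zero_le_one
  ⟨fun i _ => hnonneg i, by simp [sum_pi_single', hk]⟩

lemma sum_mul_norm_sub_sq (hθ : ∑ i ∈ C, θ i = 1) (x : E) :
    ∑ i ∈ C, θ i * ‖g i - x‖ ^ 2 =
      ∑ i ∈ C, θ i * ‖g i - ∑ j ∈ C, θ j • g j‖ ^ 2 + ‖∑ i ∈ C, θ i • g i - x‖ ^ 2 := by
  set a := ∑ i ∈ C, θ i • g i with ha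
  have hcross : ∑ i ∈ C, θ i * ⟪g i - a, a - x⟫ = 0 := by
    simp only [← real_inner_smul_left, ← sum_inner, smul_sub, sum_sub_distrib, ← sum_smul, hθ,
      one_smul, ← ha, sub_self, inner_zero_left]
  calc ∑ i ∈ C, θ i * ‖g i - x‖ ^ 2
      = ∑ i ∈ C, (θ i * ‖g i - a‖ ^ 2 + 2 * (θ i * ⟪g i - a, a - x⟫) + θ i * ‖a - x‖ ^ 2) := by
        refine sum_congr rfl fun i _ => ?_
        rw [← sub_add_sub_cancel (g i) a x, norm_add_sq_real]
        ring
    _ = ∑ i ∈ C, θ i * ‖g i - a‖ ^ 2 + ‖a - x‖ ^ 2 := by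
        rw [sum_add_distrib, sum_add_distrib, ← mul_sum, hcross, ← sum_mul, hθ]
        ring

lemma qCriterion_add_norm_sq_le (hθ : θ ∈ weightSimplex C)
    (hmin : IsMinOn (qCriterion C g z U) (weightSimplex C) θ) (hk : k ∈ C) :
    qCriterion C g z U θ + ‖∑ i ∈ C, θ i • g i - g k‖ ^ 2 ≤ 2 * ‖z - g k‖ ^ 2 + 2 * U k := by
  classical
  let ℓ : (ι → ℝ) →ₗ[ℝ] ℝ :=
    ∑ i ∈ C, (LinearMap.proj i).smulRight (‖z - g i‖ ^ 2 + 2 * U i)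
  let L : (ι → ℝ) →ₗ[ℝ] E := ∑ i ∈ C, (LinearMap.proj i).smulRight (g i)
  have hcrit : qCriterion C g z U = fun θ => ℓ θ + ‖z - L θ‖ ^ 2 := by
    ext θ
    simp [qCriterion, ℓ, L]
  have hvertex : ℓ (Pi.single k 1) + ‖z - L (Pi.single k 1)‖ ^ 2 =
      2 * ‖z - g k‖ ^ 2 + 2 * U k := by
    simp only [ℓ, L, LinearMap.coe_sum, LinearMap.coe_smulRight, LinearMap.coe_proj,
      Function.eval, smul_eq_mul, Finset.sum_apply, Pi.single_apply, ite_mul, one_mul, zero_mul,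
      sum_ite_eq', hk, ↓reduceIte, ite_smul, one_smul, zero_smul]
    ring
  have h := add_norm_sq_le_of_isMinOn (convex_weightSimplex C) ℓ L z hθ
    (single_mem_weightSimplex hk) (hcrit ▸ hmin)
  rw [hvertex] at h
  simpa [hcrit, ℓ, L, Pi.single_apply, hk] using h

theorem two_mul_norm_sq_add_sum_le_of_isMinOn_qCriterion (hθ : θ ∈ weightSimplex C)
    (hmin : IsMinOn (qCriterion C g z U) (weightSimplex C) θ) (hk : k ∈ C) :
    2 * ‖z - ∑ i ∈ C, θ i • g i‖ ^ 2 + ∑ i ∈ C, θ i * (‖g i - g k‖ ^ 2 + 2 * U i) ≤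
      2 * ‖z - g k‖ ^ 2 + 2 * U k := by
  have hgrowth := qCriterion_add_norm_sq_le hθ hmin hk
  have hz := sum_mul_norm_sub_sq (g := g) hθ.2 z
  have hgk := sum_mul_norm_sub_sq (g := g) hθ.2 (g k)
  simp only [qCriterion, norm_sub_rev z, mul_add, sum_add_distrib] at hgrowth hz ⊢
  linarith

theorem norm_sub_sq_le_of_isMinOn_qCriterion (hθ : θ ∈ weightSimplex C)
    (hmin : IsMinOn (qCriterion C g (f + η) U) (weightSimplex C) θ) (hk : k ∈ C)
    (hη : ∀ i ∈ C, 2 * ⟪η, g i - g k⟫ ≤ ‖g i - g k‖ ^ 2 / 2 + U i + U k) :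
    ‖∑ i ∈ C, θ i • g i - f‖ ^ 2 ≤ ‖g k - f‖ ^ 2 + 2 * U k := by
  set a := ∑ i ∈ C, θ i • g i with ha
  have hopt : 2 * ‖f + η - a‖ ^ 2 + ∑ i ∈ C, θ i * (‖g i - g k‖ ^ 2 + 2 * U i) ≤
      2 * ‖f + η - g k‖ ^ 2 + 2 * U k :=
    two_mul_norm_sq_add_sum_le_of_isMinOn_qCriterion hθ hmin hk
  have hnoise : 2 * ⟪η, a - g k⟫ ≤
      (∑ i ∈ C, θ i * (‖g i - g k‖ ^ 2 + 2 * U i)) / 2 + U k := by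
    have hsub : a - g k = ∑ i ∈ C, θ i • (g i - g k) := by
      simp only [smul_sub, sum_sub_distrib, ← sum_smul, hθ.2, one_smul, ha]
    calc 2 * ⟪η, a - g k⟫ = ∑ i ∈ C, θ i * (2 * ⟪η, g i - g k⟫) := by
          rw [hsub, inner_sum, mul_sum]
          exact sum_congr rfl fun i _ => by rw [real_inner_smul_right]; ring
      _ ≤ ∑ i ∈ C, θ i * (‖g i - g k‖ ^ 2 / 2 + U i + U k) :=
          sum_le_sum fun i hi => mul_le_mul_of_nonneg_left (hη i hi) (hθ.1 i hi)
      _ = (∑ i ∈ C, θ i * (‖g i - g k‖ ^ 2 + 2 * U i)) / 2 + (∑ i ∈ C, θ i) * U k := by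
          rw [sum_div, sum_mul, ← sum_add_distrib]
          exact sum_congr rfl fun i _ => by ring
      _ = _ := by rw [hθ.2, one_mul]
  have hexpand (v : E) :
      ‖f + η - v‖ ^ 2 = ‖η‖ ^ 2 - 2 * ⟪η, v - f⟫ + ‖v - f‖ ^ 2 := by
    rw [← norm_sub_sq_real]
    congr 2
    abel
  have hinner : ⟪η, a - g k⟫ = ⟪η, a - f⟫ - ⟪η, g k - f⟫ := by
    rw [← inner_sub_right, sub_sub_sub_cancel_right]
  rw [hexpand, hexpand] at hopt
  linarith

end QAggregation

section Dictionary

variable {κ E : Type*} [NormedAddCommGroup E] [InnerProductSpace ℝ E]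

/-- The span of the dictionary elements selected by the model `S`. -/
abbrev modelSpan (φ : κ → E) (S : Finset κ) : Submodule ℝ E := Submodule.span ℝ (φ '' S)

instance modelSpan.finiteDimensional (φ : κ → E) (S : Finset κ) :
    FiniteDimensional ℝ (modelSpan φ S) :=
  FiniteDimensional.span_of_finite ℝ (S.finite_toSet.image φ)

/-- The restricted lower frame bound `c ‖x‖² ≤ ‖∑ j, x j φ j‖²` for coefficient vectors `x`
supported on at most `r` indices; its best constant is `ν_r²`. -/
def RestrictedLowerBound (φ : κ → E) (r : ℕ) (c : ℝ) : Prop :=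
  ∀ S : Finset κ, #S ≤ r → ∀ x : κ → ℝ, c * ∑ j ∈ S, x j ^ 2 ≤ ‖∑ j ∈ S, x j • φ j‖ ^ 2

variable {φ : κ → E} {r : ℕ} {c : ℝ} {S T : Finset κ} {η v : E}

lemma inner_sq_le_of_mem_modelSpan (hφ : RestrictedLowerBound φ r c) (hc : 0 < c) (hS : #S ≤ r)
    (hv : v ∈ modelSpan φ S) :
    ⟪η, v⟫ ^ 2 ≤ (∑ j ∈ S, ⟪η, φ j⟫ ^ 2) / c * ‖v‖ ^ 2 := by
  obtain ⟨x, rfl⟩ := Submodule.mem_span_image_finset_iff_exists_fun' ℝ |>.1 hv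
  have hx : ∑ j ∈ S, x j ^ 2 ≤ ‖∑ j ∈ S, x j • φ j‖ ^ 2 / c :=
    (le_div_iff₀' hc).2 (hφ S hS x)
  calc ⟪η, ∑ j ∈ S, x j • φ j⟫ ^ 2 = (∑ j ∈ S, x j * ⟪η, φ j⟫) ^ 2 := by
        simp only [inner_sum, real_inner_smul_right]
    _ ≤ (∑ j ∈ S, x j ^ 2) * ∑ j ∈ S, ⟪η, φ j⟫ ^ 2 := sum_mul_sq_le_sq_mul_sq S x _
    _ ≤ ‖∑ j ∈ S, x j • φ j‖ ^ 2 / c * ∑ j ∈ S, ⟪η, φ j⟫ ^ 2 := by gcongr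
    _ = _ := by ring

lemma norm_starProjection_modelSpan_sq_le (hφ : RestrictedLowerBound φ r c) (hc : 0 < c)
    (hS : #S ≤ r) (η : E) :
    ‖(modelSpan φ S).starProjection η‖ ^ 2 ≤ (∑ j ∈ S, ⟪η, φ j⟫ ^ 2) / c := by
  set P := (modelSpan φ S).starProjection
  have hinner : ⟪η, P η⟫ = ‖P η‖ ^ 2 := by
    have h := (modelSpan φ S).starProjection_inner_eq_zero η (P η)
      (Submodule.starProjection_apply_mem _ _)
    rwa [inner_sub_left, real_inner_self_eq_norm_sq, sub_eq_zero] at h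
  have hbound := inner_sq_le_of_mem_modelSpan (η := η) hφ hc hS
    (Submodule.starProjection_apply_mem (modelSpan φ S) η)
  rw [hinner, sq (‖P η‖ ^ 2)] at hbound
  rcases (sq_nonneg ‖P η‖).eq_or_lt with hzero | hpos
  · rw [← hzero]
    positivity
  · exact le_of_mul_le_mul_right hbound hpos

lemma two_mul_le_half_add_two_mul {q a b : ℝ} (ha : 0 ≤ a) (hb : 0 ≤ b) (h : q ^ 2 ≤ b * a) :
    2 * q ≤ a / 2 + 2 * b := by
  refine le_of_abs_le (abs_le_of_sq_le_sq ?_ (by positivity))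
  nlinarith [sq_nonneg (a / 2 - 2 * b)]

lemma two_mul_inner_sub_le_of_mem_modelSpan (hφ : RestrictedLowerBound φ r c) (hc : 0 < c)
    (hST : #S + #T ≤ r) {u : E} (hu : u ∈ modelSpan φ S) (hv : v ∈ modelSpan φ T) :
    2 * ⟪η, u - v⟫ ≤ ‖u - v‖ ^ 2 / 2 +
      2 * ((∑ j ∈ S, ⟪η, φ j⟫ ^ 2) / c) + 2 * ((∑ j ∈ T, ⟪η, φ j⟫ ^ 2) / c) := by
  classical
  have hmem : u - v ∈ modelSpan φ (S ∪ T) :=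
    sub_mem (Submodule.span_mono (by gcongr; exact subset_union_left) hu)
      (Submodule.span_mono (by gcongr; exact subset_union_right) hv)
  have hunion : ∑ j ∈ S ∪ T, ⟪η, φ j⟫ ^ 2 ≤ ∑ j ∈ S, ⟪η, φ j⟫ ^ 2 + ∑ j ∈ T, ⟪η, φ j⟫ ^ 2 := by
    rw [← sum_union_inter]
    exact le_add_of_nonneg_right (sum_nonneg fun j _ => sq_nonneg _)
  calc 2 * ⟪η, u - v⟫
      ≤ ‖u - v‖ ^ 2 / 2 + 2 * ((∑ j ∈ S ∪ T, ⟪η, φ j⟫ ^ 2) / c) :=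
        two_mul_le_half_add_two_mul (sq_nonneg _) (by positivity)
          (inner_sq_le_of_mem_modelSpan hφ hc ((card_union_le S T).trans hST) hmem)
    _ ≤ ‖u - v‖ ^ 2 / 2 +
          2 * ((∑ j ∈ S, ⟪η, φ j⟫ ^ 2 + ∑ j ∈ T, ⟪η, φ j⟫ ^ 2) / c) := by gcongr
    _ = _ := by ring

lemma norm_starProjection_add_sub_sq (K : Submodule ℝ E) [K.HasOrthogonalProjection] (f η : E) :
    ‖K.starProjection (f + η) - f‖ ^ 2 =
      ‖K.starProjection f - f‖ ^ 2 + ‖K.starProjection η‖ ^ 2 := by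
  have horth : ⟪K.starProjection f - f, K.starProjection η⟫ = 0 := by
    rw [← neg_sub, inner_neg_left,
      K.starProjection_inner_eq_zero f _ (Submodule.starProjection_apply_mem _ _), neg_zero]
  rw [map_add, add_sub_right_comm, norm_add_sq_real, horth]
  ring

theorem norm_sub_sq_le_of_isMinOn_qCriterion_starProjection {C : Finset (Finset κ)} {f : E}
    {w : κ → ℝ} {θ : Finset κ → ℝ} {M : Finset κ}
    (hφ : RestrictedLowerBound φ r c) (hc : 0 < c) (hC : ∀ S ∈ C, 2 * #S ≤ r)
    (hw : ∀ j, ⟪η, φ j⟫ ^ 2 ≤ w j) (hθ : θ ∈ weightSimplex C)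
    (hmin : IsMinOn (qCriterion C (fun S => (modelSpan φ S).starProjection (f + η)) (f + η)
      fun S => 2 * ((∑ j ∈ S, w j) / c)) (weightSimplex C) θ) (hM : M ∈ C) :
    ‖∑ S ∈ C, θ S • (modelSpan φ S).starProjection (f + η) - f‖ ^ 2 ≤
      ‖(modelSpan φ M).starProjection f - f‖ ^ 2 + 5 * ((∑ j ∈ M, w j) / c) := by
  have hsum (S : Finset κ) : (∑ j ∈ S, ⟪η, φ j⟫ ^ 2) / c ≤ (∑ j ∈ S, w j) / c :=
    div_le_div_of_nonneg_right (sum_le_sum fun j _ => hw j) hc.le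
  have hcard := hC M hM
  have haggregate := norm_sub_sq_le_of_isMinOn_qCriterion hθ hmin hM fun S hS => by
    have hnoise := two_mul_inner_sub_le_of_mem_modelSpan (η := η) hφ hc
      (show #S + #M ≤ r by have := hC S hS; lia)
      (Submodule.starProjection_apply_mem (modelSpan φ S) (f + η))
      (Submodule.starProjection_apply_mem (modelSpan φ M) (f + η))
    linarith [hsum S, hsum M]
  have hvariance := norm_starProjection_modelSpan_sq_le hφ hc (show #M ≤ r by lia) η
  rw [norm_starProjection_add_sub_sq] at haggregate
  linarith [hsum M]

end Dictionary

section GaussianTail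

lemma hasDerivAt_neg_exp_neg_sq_div_two (x : ℝ) :
    HasDerivAt (fun y : ℝ => -Real.exp (-y ^ 2 / 2)) (x * Real.exp (-x ^ 2 / 2)) x := by
  have hexponent : HasDerivAt (fun y : ℝ => -y ^ 2 / 2) (-x) x := by
    convert! ((hasDerivAt_pow 2 x).neg).div_const 2 using 1
    norm_num
    ring
  convert! hexponent.exp.neg using 1
  ring

lemma integrable_mul_exp_neg_sq_div_two : Integrable fun x : ℝ => x * Real.exp (-x ^ 2 / 2) := by
  convert! integrable_mul_exp_neg_mul_sq (b := 1 / 2) (by norm_num) using 4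
  ring

lemma integral_Ioi_mul_exp_neg_sq_div_two (t : ℝ) :
    ∫ x in Set.Ioi t, x * Real.exp (-x ^ 2 / 2) = Real.exp (-t ^ 2 / 2) := by
  have hlim : Filter.Tendsto (fun x : ℝ => -Real.exp (-x ^ 2 / 2)) Filter.atTop (nhds (-0)) := by
    refine (Real.tendsto_exp_atBot.comp ?_).neg
    simp only [neg_div]
    exact Filter.tendsto_neg_atTop_atBot.comp
      ((Filter.tendsto_pow_atTop two_ne_zero).atTop_div_const two_pos)
  rw [integral_Ioi_of_hasDerivAt_of_tendsto' (fun x _ => hasDerivAt_neg_exp_neg_sq_div_two x)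
    integrable_mul_exp_neg_sq_div_two.integrableOn hlim]
  ring

/- On `Ioi t` the density is at most `x / t` times itself, and the latter is integrated in closed
form. -/
lemma gaussianReal_zero_one_Ioi_le {t : ℝ} (ht : 0 < t) :
    gaussianReal 0 1 (Set.Ioi t) ≤
      ENNReal.ofReal ((t * √(2 * Real.pi))⁻¹ * Real.exp (-t ^ 2 / 2)) := by
  rw [gaussianReal_apply_eq_integral 0 one_ne_zero]
  refine ENNReal.ofReal_le_ofReal ?_
  calc ∫ x in Set.Ioi t, gaussianPDFReal 0 1 x
      ≤ ∫ x in Set.Ioi t, (t * √(2 * Real.pi))⁻¹ * (x * Real.exp (-x ^ 2 / 2)) := by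
        refine setIntegral_mono_on (integrable_gaussianPDFReal 0 1).integrableOn
          (integrable_mul_exp_neg_sq_div_two.integrableOn.const_mul _) measurableSet_Ioi
          fun x hx => ?_
        have hratio : 1 ≤ t⁻¹ * x := by
          rw [inv_mul_eq_div]
          exact (one_le_div ht).2 (le_of_lt hx)
        calc gaussianPDFReal 0 1 x = 1 * ((√(2 * Real.pi))⁻¹ * Real.exp (-x ^ 2 / 2)) := by
              simp [gaussianPDFReal]
          _ ≤ t⁻¹ * x * ((√(2 * Real.pi))⁻¹ * Real.exp (-x ^ 2 / 2)) := by gcongr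
          _ = _ := by ring
    _ = _ := by rw [integral_const_mul, integral_Ioi_mul_exp_neg_sq_div_two]

lemma gaussianReal_zero_Iio_neg (v : ℝ≥0) (t : ℝ) :
    gaussianReal 0 v (Set.Iio (-t)) = gaussianReal 0 v (Set.Ioi t) := by
  have hmap : (gaussianReal 0 v).map (fun x => -x) = gaussianReal 0 v := by
    simpa using gaussianReal_map_neg (μ := 0) (v := v)
  rw [← hmap, Measure.map_apply measurable_neg measurableSet_Iio, hmap]
  congr 1
  ext x
  simp

lemma gaussianReal_zero_one_lt_abs_le {t : ℝ} (ht : 0 < t) :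
    gaussianReal 0 1 {x | t < |x|} ≤
      ENNReal.ofReal (√(2 / Real.pi) / t * Real.exp (-t ^ 2 / 2)) := by
  have hset : {x : ℝ | t < |x|} = Set.Iio (-t) ∪ Set.Ioi t := by
    ext x
    simp [lt_abs, lt_neg, or_comm]
  have hconst : √(2 / Real.pi) = 2 * (√(2 * Real.pi))⁻¹ := by
    rw [Real.sqrt_div zero_le_two, Real.sqrt_mul zero_le_two]
    field_simp
    norm_num
  rw [hset]
  calc gaussianReal 0 1 (Set.Iio (-t) ∪ Set.Ioi t)
      ≤ gaussianReal 0 1 (Set.Iio (-t)) + gaussianReal 0 1 (Set.Ioi t) := measure_union_le _ _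
    _ = 2 * gaussianReal 0 1 (Set.Ioi t) := by rw [gaussianReal_zero_Iio_neg, two_mul]
    _ ≤ 2 * ENNReal.ofReal ((t * √(2 * Real.pi))⁻¹ * Real.exp (-t ^ 2 / 2)) := by
        gcongr
        exact gaussianReal_zero_one_Ioi_le ht
    _ = ENNReal.ofReal (√(2 / Real.pi) / t * Real.exp (-t ^ 2 / 2)) := by
        rw [← ENNReal.ofReal_ofNat 2, ← ENNReal.ofReal_mul zero_le_two, hconst]
        congr 1
        ring

lemma gaussianReal_zero_one_lt_sq_le {τ : ℝ} (hτ : 1 ≤ τ) :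
    gaussianReal 0 1 {x | τ < x ^ 2} ≤ ENNReal.ofReal (√(2 / Real.pi) * Real.exp (-τ / 2)) := by
  have hsqrt : 1 ≤ √τ := Real.one_le_sqrt.2 hτ
  have hset : {x : ℝ | τ < x ^ 2} = {x | √τ < |x|} := by
    ext x
    rw [Set.mem_ofPred_eq, Set.mem_ofPred_eq, ← Real.sqrt_sq_eq_abs,
      Real.sqrt_lt_sqrt_iff (zero_le_one.trans hτ)]
  have htail := gaussianReal_zero_one_lt_abs_le (zero_lt_one.trans_le hsqrt)
  rw [Real.sq_sqrt (zero_le_one.trans hτ)] at htail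
  rw [hset]
  refine htail.trans (ENNReal.ofReal_le_ofReal ?_)
  gcongr
  exact div_le_self (Real.sqrt_nonneg _) hsqrt

lemma gaussianReal_zero_mul_variance_lt_sq_le (v : ℝ≥0) {τ : ℝ} (hτ : 1 ≤ τ) :
    gaussianReal 0 v {x | τ * v < x ^ 2} ≤
      ENNReal.ofReal (√(2 / Real.pi) * Real.exp (-τ / 2)) := by
  have hscale : (gaussianReal 0 1).map (fun x => √v * x) = gaussianReal 0 v := by
    rw [gaussianReal_map_const_mul, mul_zero, mul_one]
    congr 1
    exact NNReal.eq (Real.sq_sqrt v.coe_nonneg)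
  rw [← hscale, Measure.map_apply (by fun_prop)
    (measurableSet_lt measurable_const (by fun_prop))]
  refine (measure_mono fun x hx => ?_).trans (gaussianReal_zero_one_lt_sq_le hτ)
  simp only [Set.preimage_ofPred_eq, Set.mem_ofPred_eq, mul_pow, Real.sq_sqrt v.coe_nonneg] at hx
  exact lt_of_mul_lt_mul_left (by linarith) v.coe_nonneg

lemma ofReal_one_sub_le_measure_forall_sq_le {Ω κ : Type*} [MeasurableSpace Ω] {μ : Measure Ω}
    [IsProbabilityMeasure μ] [Fintype κ] {X : κ → Ω → ℝ} {v : κ → ℝ≥0}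
    (hX : ∀ j, HasLaw (X j) (gaussianReal 0 (v j)) μ) {τ : ℝ} (hτ : 1 ≤ τ) :
    ENNReal.ofReal (1 - Fintype.card κ * (√(2 / Real.pi) * Real.exp (-τ / 2))) ≤
      μ {ω | ∀ j, X j ω ^ 2 ≤ τ * v j} := by
  have hbad : μ {ω | ∀ j, X j ω ^ 2 ≤ τ * v j}ᶜ ≤
      ENNReal.ofReal (Fintype.card κ * (√(2 / Real.pi) * Real.exp (-τ / 2))) :=
    calc μ {ω | ∀ j, X j ω ^ 2 ≤ τ * v j}ᶜ = μ (⋃ j, {ω | τ * v j < X j ω ^ 2}) := by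
          congr 1
          ext ω
          simp
      _ ≤ ∑ j, μ {ω | τ * v j < X j ω ^ 2} := measure_iUnion_fintype_le _ _
      _ = ∑ j, gaussianReal 0 (v j) {x | τ * v j < x ^ 2} := by
          refine sum_congr rfl fun j _ => ?_
          exact (hX j).measure_eq (p := fun x => τ * v j < x ^ 2)
            (measurableSet_lt measurable_const (by fun_prop))
      _ ≤ ∑ _j : κ, ENNReal.ofReal (√(2 / Real.pi) * Real.exp (-τ / 2)) :=
          sum_le_sum fun j _ => gaussianReal_zero_mul_variance_lt_sq_le (v j) hτ
      _ = _ := by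
          rw [sum_const, card_univ, ← ENNReal.ofReal_nsmul, nsmul_eq_mul]
  rw [ENNReal.ofReal_sub _ (by positivity), ENNReal.ofReal_one]
  refine (tsub_le_tsub_left hbad 1).trans (tsub_le_iff_right.2 ?_)
  simpa using measure_univ_le_add_compl (μ := μ) {ω | ∀ j, X j ω ^ 2 ≤ τ * v j}

lemma map_inner_stdGaussian {E : Type*} [NormedAddCommGroup E] [InnerProductSpace ℝ E]
    [FiniteDimensional ℝ E] [MeasurableSpace E] [BorelSpace E] (a : E) :
    (stdGaussian E).map (fun x => ⟪a, x⟫) = gaussianReal 0 (‖a‖₊ ^ 2) := by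
  have h := IsGaussian.map_eq_gaussianReal (μ := stdGaussian E) (innerSL ℝ a)
  rw [integral_strongDual_stdGaussian, variance_dual_stdGaussian, innerSL_apply_norm] at h
  simpa [Real.toNNReal_pow] using h

end GaussianTail

section EuclideanModel

variable {n m p r k : ℕ} {A : Matrix (Fin n) (Fin m) ℝ} {Φ : Matrix (Fin m) (Fin p) ℝ}
  {H : Finset (Fin p) → Matrix (Fin m) (Fin m) ℝ} {C : Finset (Finset (Fin p))}

/-- The `j`-th dictionary element `φ_j`, as a vector of the Euclidean space `ℝ^m`. -/
def atom (Φ : Matrix (Fin m) (Fin p) ℝ) (j : Fin p) : EuclideanSpace ℝ (Fin m) :=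
  WithLp.toLp 2 (colv Φ j)

lemma sqnorm_eq_norm_toLp_sq (v : Fin k → ℝ) : sqnorm v = ‖WithLp.toLp 2 v‖ ^ 2 :=
  (EuclideanSpace.real_norm_sq_eq _).symm

lemma ip_eq_inner_toLp (u v : Fin k → ℝ) : ip u v = ⟪WithLp.toLp 2 u, WithLp.toLp 2 v⟫ := by
  simp [ip, PiLp.inner_apply, mul_comm]

lemma inner_toLp_mulVec {α β : Type*} [Fintype α] [Fintype β] (B : Matrix α β ℝ) (u : β → ℝ)
    (v : α → ℝ) :
    ⟪WithLp.toLp 2 (B *ᵥ u), WithLp.toLp 2 v⟫ = ⟪WithLp.toLp 2 u, WithLp.toLp 2 (Bᵀ *ᵥ v)⟫ := by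
  simp only [EuclideanSpace.inner_toLp_toLp, star_trivial, mulVec_transpose,
    dotProduct_mulVec]

lemma frob2_restr (B : Matrix (Fin n) (Fin p) ℝ) (M : Finset (Fin p)) :
    frob2 (restr B M) = ∑ j ∈ M, sqnorm (colv B j) := by
  rw [frob2, ← sum_subset (subset_univ M)]
  · exact sum_congr rfl fun j hj => by simp [sqnorm, colv, restr, hj]
  · exact fun j _ hj => by simp [sqnorm, colv, restr, hj]

lemma Ufun_eq (A : Matrix (Fin n) (Fin m) ℝ) (Φ : Matrix (Fin m) (Fin p) ℝ) (σ δ ν2 : ℝ)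
    (M : Finset (Fin p)) :
    Ufun A Φ σ δ ν2 M =
      2 * ((∑ j ∈ M, σ ^ 2 * (2 * (δ + 1) * Real.log p * sqnorm (colv (Psi A Φ) j))) / ν2) := by
  rw [Ufun, frob2_restr, ← mul_sum, ← mul_sum]
  ring

lemma toLp_mulVec_eq_sum_atom {M : Finset (Fin p)} {x : Fin p → ℝ} (hx : ∀ j ∉ M, x j = 0) :
    WithLp.toLp 2 (Φ *ᵥ x) = ∑ j ∈ M, x j • atom Φ j := by
  rw [sum_subset (subset_univ M) fun j _ hj => by rw [hx j hj, zero_smul]]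
  ext i
  simp [atom, colv, mulVec, dotProduct, mul_comm]

lemma restrictedLowerBound_atom {ν2 : ℝ}
    (hν2 : ∀ x : Fin p → ℝ, x ≠ 0 → sparse r x → ν2 * sqnorm x ≤ sqnorm (Φ *ᵥ x)) :
    RestrictedLowerBound (atom Φ) r ν2 := by
  intro S hS x
  set y : Fin p → ℝ := fun j => if j ∈ S then x j else 0
  have hy : ∀ j ∉ S, y j = 0 := fun j hj => if_neg hj
  have hsparse : sparse r y := by
    refine (Set.ncard_le_ncard (t := S) fun j hj => ?_).trans (by simpa using hS)
    exact not_imp_comm.1 (hy j) hj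
  have hbound : ν2 * sqnorm y ≤ sqnorm (Φ *ᵥ y) := by
    rcases eq_or_ne y 0 with hzero | hne
    · simp [hzero, sqnorm]
    · exact hν2 y hne hsparse
  rw [sqnorm_eq_norm_toLp_sq (Φ *ᵥ y), toLp_mulVec_eq_sum_atom hy] at hbound
  simpa [sqnorm, y, ite_pow, ite_smul, sum_ite_mem] using hbound

lemma map_span_colv (Φ : Matrix (Fin m) (Fin p) ℝ) (M : Finset (Fin p)) :
    (Submodule.span ℝ (colv Φ '' M)).map (WithLp.linearEquiv 2 ℝ (Fin m → ℝ)).symm.toLinearMap =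
      modelSpan (atom Φ) M := by
  rw [Submodule.map_span, Set.image_image]
  rfl

lemma IsProjOnto.toLp_mulVec {M : Finset (Fin p)} {P : Matrix (Fin m) (Fin m) ℝ}
    (hP : IsProjOnto Φ M P) (v : Fin m → ℝ) :
    WithLp.toLp 2 (P *ᵥ v) = (modelSpan (atom Φ) M).starProjection (WithLp.toLp 2 v) := by
  obtain ⟨hsymm, hidem, hrange⟩ := hP
  have hspan : modelSpan (atom Φ) M = (LinearMap.range P.mulVecLin).map
      (WithLp.linearEquiv 2 ℝ (Fin m → ℝ)).symm.toLinearMap := by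
    rw [hrange, map_span_colv]
  refine (Submodule.eq_starProjection_of_mem_of_inner_eq_zero ?_ fun w hw => ?_).symm
  · rw [hspan]
    exact ⟨P *ᵥ v, ⟨v, rfl⟩, rfl⟩
  · rw [hspan] at hw
    obtain ⟨_, ⟨u, rfl⟩, rfl⟩ := hw
    change ⟪WithLp.toLp 2 v - WithLp.toLp 2 (P *ᵥ v), WithLp.toLp 2 (P *ᵥ u)⟫ = 0
    rw [inner_sub_left, inner_toLp_mulVec, hsymm, mulVec_mulVec, hidem, sub_self]

lemma toLp_aggEst (hH : ∀ M ∈ C, IsProjOnto Φ M (H M)) (z : Fin m → ℝ)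
    (θ : Finset (Fin p) → ℝ) :
    WithLp.toLp 2 (aggEst C H z θ) =
      ∑ M ∈ C, θ M • (modelSpan (atom Φ) M).starProjection (WithLp.toLp 2 z) := by
  rw [aggEst, WithLp.toLp_sum]
  exact sum_congr rfl fun M hM => by rw [WithLp.toLp_smul, (hH M hM).toLp_mulVec]

lemma aggCrit_eq_qCriterion (hH : ∀ M ∈ C, IsProjOnto Φ M (H M)) (z : Fin m → ℝ)
    (U θ : Finset (Fin p) → ℝ) :
    aggCrit C H z U θ = qCriterion C
      (fun M => (modelSpan (atom Φ) M).starProjection (WithLp.toLp 2 z)) (WithLp.toLp 2 z) U θ := by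
  rw [aggCrit, qCriterion, sqnorm_eq_norm_toLp_sq, WithLp.toLp_sub, toLp_aggEst hH]
  congr 1
  refine sum_congr rfl fun M hM => ?_
  rw [sqnorm_eq_norm_toLp_sq, WithLp.toLp_sub, (hH M hM).toLp_mulVec]

lemma isUnit_transpose_mul_self_of_rank_eq_card {α β : Type*} [Fintype α] [Fintype β]
    [DecidableEq β] {B : Matrix α β ℝ} (hB : B.rank = Fintype.card β) : IsUnit (Bᵀ * B) := by
  rw [← linearIndependent_cols_iff_isUnit, linearIndependent_iff_card_eq_finrank_span,
    Set.finrank, ← rank_eq_finrank_span_cols, rank_transpose_mul_self, hB]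

lemma zv_eq_add_smul_xiv (hA : A.rank = m) (f : Fin m → ℝ) (σ : ℝ) (e : Fin n → ℝ) :
    zv A f σ e = f + σ • xiv A e := by
  have hunit : IsUnit (Aᵀ * A) :=
    isUnit_transpose_mul_self_of_rank_eq_card (hA.trans (Fintype.card_fin m).symm)
  have hinv : (Aᵀ * A)⁻¹ * (Aᵀ * A) = 1 := nonsing_inv_mul _ ((isUnit_iff_isUnit_det _).1 hunit)
  rw [zv, xiv, mulVec_add, mulVec_mulVec, Matrix.mul_assoc, hinv, one_mulVec, mulVec_smul]

lemma inner_toLp_xiv_atom (A : Matrix (Fin n) (Fin m) ℝ) (Φ : Matrix (Fin m) (Fin p) ℝ)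
    (e : Fin n → ℝ) (j : Fin p) :
    ⟪WithLp.toLp 2 (xiv A e), atom Φ j⟫ = ip (colv (Psi A Φ) j) e := by
  have hcol : colv (Psi A Φ) j = (A * (Aᵀ * A)⁻¹) *ᵥ colv Φ j := rfl
  have htranspose : ((Aᵀ * A)⁻¹ * Aᵀ)ᵀ = A * (Aᵀ * A)⁻¹ := by
    simp [transpose_mul, transpose_nonsing_inv]
  rw [xiv, atom, inner_toLp_mulVec, htranspose, ← hcol, ip_eq_inner_toLp, real_inner_comm]

theorem sqnorm_aggEst_sub_le {σ δ ν2 : ℝ} {f : Fin m → ℝ} {e : Fin n → ℝ}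
    {θ : Finset (Fin p) → ℝ} {M : Finset (Fin p)} (hA : A.rank = m) (hν2 : 0 < ν2)
    (hΦ : RestrictedLowerBound (atom Φ) r ν2) (hC : ∀ S ∈ C, 2 * #S ≤ r)
    (hH : ∀ S ∈ C, IsProjOnto Φ S (H S))
    (he : ∀ j, ip (colv (Psi A Φ) j) e ^ 2 ≤
      2 * (δ + 1) * Real.log p * sqnorm (colv (Psi A Φ) j))
    (hθ : θ ∈ weightSimplex C)
    (hmin : IsMinOn (aggCrit C H (zv A f σ e) (Ufun A Φ σ δ ν2)) (weightSimplex C) θ)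
    (hM : M ∈ C) :
    sqnorm (aggEst C H (zv A f σ e) θ - f) ≤ sqnorm (H M *ᵥ f - f) +
      10 / ν2 * σ ^ 2 * (δ + 1) * frob2 (restr (Psi A Φ) M) * Real.log p := by
  have hz : WithLp.toLp 2 (zv A f σ e) = WithLp.toLp 2 f + σ • WithLp.toLp 2 (xiv A e) := by
    rw [zv_eq_add_smul_xiv hA, WithLp.toLp_add, WithLp.toLp_smul]
  have hnoise (j : Fin p) : ⟪σ • WithLp.toLp 2 (xiv A e), atom Φ j⟫ ^ 2 ≤
      σ ^ 2 * (2 * (δ + 1) * Real.log p * sqnorm (colv (Psi A Φ) j)) := by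
    rw [real_inner_smul_left, mul_pow, inner_toLp_xiv_atom]
    exact mul_le_mul_of_nonneg_left (he j) (sq_nonneg σ)
  rw [funext (aggCrit_eq_qCriterion hH _ _), funext (Ufun_eq A Φ σ δ ν2), hz] at hmin
  have horacle := norm_sub_sq_le_of_isMinOn_qCriterion_starProjection hΦ hν2 hC hnoise hθ hmin hM
  rw [← hz, ← toLp_aggEst hH, ← (hH M hM).toLp_mulVec, ← WithLp.toLp_sub, ← WithLp.toLp_sub,
    ← sqnorm_eq_norm_toLp_sq, ← sqnorm_eq_norm_toLp_sq, ← mul_sum, ← mul_sum,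
    ← frob2_restr] at horacle
  exact horacle.trans_eq (by ring)

lemma hasLaw_ip_of_map_eq_pi {Ω : Type*} [MeasurableSpace Ω] {μ : Measure Ω} {ε : Ω → Fin n → ℝ}
    (hε : Measurable ε) (hlaw : μ.map ε = Measure.pi fun _ => gaussianReal 0 1) (a : Fin n → ℝ) :
    HasLaw (fun ω => ip a (ε ω)) (gaussianReal 0 (sqnorm a).toNNReal) μ := by
  have hip : Measurable (ip a) := by
    unfold ip
    fun_prop
  refine ⟨(hip.comp hε).aemeasurable, ?_⟩
  change μ.map (ip a ∘ ε) = _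
  rw [← Measure.map_map hip hε, hlaw]
  have hinner := map_inner_stdGaussian (WithLp.toLp 2 a)
  rw [← map_pi_eq_stdGaussian, Measure.map_map (by fun_prop) (by fun_prop)] at hinner
  convert! hinner using 2
  · ext e
    exact ip_eq_inner_toLp a e
  · rw [sqnorm_eq_norm_toLp_sq, Real.toNNReal_pow (norm_nonneg _), norm_toNNReal]

lemma one_le_two_mul_add_one_mul_log {δ : ℝ} (hδ : 0 ≤ δ) (hp : 2 ≤ p) :
    1 ≤ 2 * (δ + 1) * Real.log p := by
  have hlog : Real.log 2 ≤ Real.log p := Real.log_le_log two_pos (by exact_mod_cast hp)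
  nlinarith [Real.log_two_gt_d9]

lemma natCast_mul_exp_neg_add_one_mul_log (hp : p ≠ 0) (δ : ℝ) :
    p * Real.exp (-(2 * (δ + 1) * Real.log p) / 2) = (p : ℝ) ^ (-δ) := by
  have hp' : (0 : ℝ) < p := by exact_mod_cast hp.bot_lt
  rw [Real.rpow_def_of_pos hp']
  nth_rewrite 1 [← Real.exp_log hp']
  rw [← Real.exp_add]
  ring_nf

end EuclideanModel

/- The union bound over the dictionary sees the noise only through the marginal laws of the
correlations `⟨ψ_j, ε⟩`. -/
theorem oracle_Q_aggregation_high_probability_general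
    {n m p r : ℕ} (A : Matrix (Fin n) (Fin m) ℝ) (hrank : A.rank = m)
    (Φ : Matrix (Fin m) (Fin p) ℝ) (σ δ : ℝ) (hδ : 1 ≤ 2 * (δ + 1) * Real.log p)
    (ν2 : ℝ) (hν2 : 0 < ν2)
    (hν2min : ∀ x : Fin p → ℝ, x ≠ 0 → sparse r x → ν2 * sqnorm x ≤ sqnorm (Φ *ᵥ x))
    (C : Finset (Finset (Fin p))) (hC : ∀ M ∈ C, 2 * #M ≤ r)
    (H : Finset (Fin p) → Matrix (Fin m) (Fin m) ℝ) (hH : ∀ M ∈ C, IsProjOnto Φ M (H M))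
    {Ω : Type*} [MeasurableSpace Ω] (μ : Measure Ω) [IsProbabilityMeasure μ]
    (ε : Ω → Fin n → ℝ)
    (hε : ∀ j, HasLaw (fun ω => ip (colv (Psi A Φ) j) (ε ω))
      (gaussianReal 0 (sqnorm (colv (Psi A Φ) j)).toNNReal) μ)
    (f : Fin m → ℝ) (θhat : Ω → Finset (Fin p) → ℝ) (hθ : ∀ ω, θhat ω ∈ weightSimplex C)
    (hθmin : ∀ ω, IsMinOn (aggCrit C H (zv A f σ (ε ω)) (Ufun A Φ σ δ ν2)) (weightSimplex C)
      (θhat ω)) :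
    ENNReal.ofReal (1 - √(2 / Real.pi) * (p : ℝ) ^ (-δ)) ≤
      μ {ω | ∀ M ∈ C, sqnorm (aggEst C H (zv A f σ (ε ω)) (θhat ω) - f) ≤
        sqnorm (H M *ᵥ f - f) +
          10 / ν2 * σ ^ 2 * (δ + 1) * frob2 (restr (Psi A Φ) M) * Real.log p} := by
  have hp : p ≠ 0 := by
    rintro rfl
    norm_num at hδ
  have hevent := ofReal_one_sub_le_measure_forall_sq_le hε hδ
  rw [Fintype.card_fin, mul_left_comm, natCast_mul_exp_neg_add_one_mul_log hp] at hevent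
  refine hevent.trans (measure_mono fun ω hω M hM => ?_)
  have hcorr (j : Fin p) : ip (colv (Psi A Φ) j) (ε ω) ^ 2 ≤
      2 * (δ + 1) * Real.log p * sqnorm (colv (Psi A Φ) j) := by
    simpa [Real.coe_toNNReal', sqnorm_eq_norm_toLp_sq] using hω j
  exact sqnorm_aggEst_sub_le hrank hν2 (restrictedLowerBound_atom hν2min) hC hH hcorr (hθ ω)
    (hθmin ω) hM

/-- Theorem 2, part 1: sharp oracle inequality with high probability for the
Q-aggregation estimator. -/
theorem oracle_Q_aggregation_high_probability
    {n m p r : ℕ} (hp : 2 ≤ p) (hmn : m ≤ n)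
    (A : Matrix (Fin n) (Fin m) ℝ) (hrank : A.rank = m)
    (Φ : Matrix (Fin m) (Fin p) ℝ) (hΦnorm : ∀ j, sqnorm (colv Φ j) = 1)
    (σ : ℝ) (hσ : 0 < σ) (δ : ℝ) (hδ : 0 < δ)
    (ν2 : ℝ) (hν2 : 0 < ν2)
    (hν2min : ∀ x : Fin p → ℝ, x ≠ 0 → sparse r x → ν2 * sqnorm x ≤ sqnorm (Φ.mulVec x))
    (H : Finset (Fin p) → Matrix (Fin m) (Fin m) ℝ)
    (hH : ∀ M : Finset (Fin p), IsProjOnto Φ M (H M))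
    {Ω : Type*} [MeasurableSpace Ω] (μ : Measure Ω) [IsProbabilityMeasure μ]
    (ε : Ω → Fin n → ℝ) (hεmeas : Measurable ε)
    (hεdist : Measure.map ε μ = Measure.pi fun _ : Fin n => gaussianReal 0 1)
    (f : Fin m → ℝ)
    (θhat : Ω → Finset (Fin p) → ℝ)
    (hθnn : ∀ ω, ∀ M ∈ models p r, 0 ≤ θhat ω M)
    (hθsum : ∀ ω, ∑ M ∈ models p r, θhat ω M = 1)
    (hθmin : ∀ ω, ∀ θ : Finset (Fin p) → ℝ,
      (∀ M ∈ models p r, 0 ≤ θ M) → (∑ M ∈ models p r, θ M = 1) →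
      aggCrit (models p r) H (zv A f σ (ε ω)) (Ufun A Φ σ δ ν2) (θhat ω) ≤
        aggCrit (models p r) H (zv A f σ (ε ω)) (Ufun A Φ σ δ ν2) θ) :
    ENNReal.ofReal (1 - Real.sqrt (2 / Real.pi) * (p : ℝ) ^ (-δ)) ≤
      μ {ω | ∀ M ∈ models p r,
        sqnorm (aggEst (models p r) H (zv A f σ (ε ω)) (θhat ω) - f) ≤
          sqnorm ((H M).mulVec f - f) +
            10 / ν2 * σ ^ 2 * (δ + 1) * frob2 (restr (Psi A Φ) M) * Real.log p} := by
  exact oracle_Q_aggregation_high_probability_general A hrank Φ σ δ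
    (one_le_two_mul_add_one_mul_log hδ.le hp) ν2 hν2 hν2min (models p r)
    (fun M hM => (mem_filter.1 hM).2) H (fun M _ => hH M) μ ε
    (fun j => hasLaw_ip_of_map_eq_pi hεmeas hεdist _) f θhat (fun ω => ⟨hθnn ω, hθsum ω⟩)
    fun ω => isMinOn_iff.2 fun θ hθ => hθmin ω θ hθ.1 hθ.2
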